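/- arXiv:2205.04965 — 2 statements merged into one kernel-verified Lean document; each statement's English description precedes it below -/
import Mathlib

section
/- Let p, q be pure unit quaternions and l, r unit quaternions. Then { (conj l) * x * r : x ∈ K_p^q } = K_p^q if and only if either ((conj l) * p * l = p and (conj r) * q * r = q) or ((conj l) * p * l = −p and (conj r) * q * r = −q). -/
open Quaternion

/-- The great circle `K_p^q`: the set of unit quaternions `x` with
`(conj x) * p * x = q`. -/
def K (p q : Quaternion ℝ) : Set (Quaternion ℝ) :=
  {x : Quaternion ℝ | ‖x‖ = 1 ∧ star x * p * x = q}

/-!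
The map `x ↦ l⁻¹ * x * r` carries `K p q` onto `K (l⁻¹ * p * l) (r⁻¹ * q * r)`, so the question is
when two of these sets coincide. If `K p q ⊆ K p' q'`, pick `x ∈ K p q`. Up to scaling `p * x` also
lies in `K p q`, and comparing the two memberships in `K p' q'` shows that `p'` commutes with `p`.
When `p` and `p'` have the same real part and norm, they are roots of the same real quadratic
polynomial, hence `p' = p` or `p' = star p`, and `q' = x⁻¹ * p' * x` is then `q` or `star q`.

An `x ∈ K p q` exists whenever `p` and `q` have the same real part and norm: again by the common
quadratic polynomial, every `p * a - a * star q` intertwines `p` and `q`, and if all of these vanish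
then `p = star q` is central, hence real, and `p = q`.
-/

section CommRing

variable {R : Type*} [CommRing R] {a b : ℍ[R]}

lemma re_mul_comm (a b : ℍ[R]) : (a * b).re = (b * a).re := by
  rw [Quaternion.re_mul, Quaternion.re_mul]
  ring

lemma add_star_eq_of_re_eq (hre : a.re = b.re) : a + star a = b + star b := by
  rw [Quaternion.self_add_star, Quaternion.self_add_star, hre]

lemma mul_star_eq_of_normSq_eq (hnormSq : normSq a = normSq b) : a * star a = b * star b := by
  rw [Quaternion.self_mul_star, Quaternion.self_mul_star, hnormSq]

lemma semiconjBy_mul_sub_mul_star (hre : a.re = b.re) (hnormSq : normSq a = normSq b)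
    (x : ℍ[R]) : SemiconjBy (a * x - x * star b) b a := by
  rw [SemiconjBy, ← sub_eq_zero]
  calc (a * x - x * star b) * b - a * (a * x - x * star b)
      = a * x * (b + star b) - x * (star b * b) - a * a * x := by noncomm_ring
    _ = a * x * (a + star a) - x * (a * star a) - a * a * x := by
        rw [add_star_eq_of_re_eq hre, mul_star_eq_of_normSq_eq hnormSq, star_comm_self']
    _ = a * ((a + star a) * x) - a * star a * x - a * a * x := by
        rw [Quaternion.self_add_star', Quaternion.self_mul_star, mul_assoc,
          Quaternion.coe_commutes, Quaternion.coe_commutes]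
    _ = 0 := by noncomm_ring

lemma star_eq_self_of_forall_commute (h : ∀ x, Commute a x) : star a = a := by
  let i : ℍ[R] := ⟨0, 1, 0, 0⟩
  let j : ℍ[R] := ⟨0, 0, 1, 0⟩
  have himI := congrArg QuaternionAlgebra.imK (h j).eq.symm
  have himJ := congrArg QuaternionAlgebra.imK (h i).eq
  have himK := congrArg QuaternionAlgebra.imJ (h i).eq.symm
  rw [Quaternion.imK_mul, Quaternion.imK_mul] at himI himJ
  rw [Quaternion.imJ_mul, Quaternion.imJ_mul] at himK
  ext
  · exact Quaternion.re_star a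
  · simpa [j] using himI
  · simpa [i] using himJ
  · simpa [i] using himK

end CommRing

section LinearOrderedCommRing

variable {R : Type*} [CommRing R] [LinearOrder R] [IsStrictOrderedRing R] {a b : ℍ[R]}

lemma eq_or_eq_star_of_commute (hcomm : Commute a b) (hre : a.re = b.re)
    (hnormSq : normSq a = normSq b) : a = b ∨ a = star b := by
  have hfactor : (a - b) * (a - star b) = 0 :=
    calc (a - b) * (a - star b) = a * a - a * star b - b * a + b * star b := by noncomm_ring
      _ = a * a - a * (b + star b) + b * star b := by rw [← hcomm.eq]; noncomm_ring
      _ = a * a - a * (a + star a) + a * star a := by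
          rw [add_star_eq_of_re_eq hre, mul_star_eq_of_normSq_eq hnormSq]
      _ = 0 := by noncomm_ring
  exact (mul_eq_zero.1 hfactor).imp sub_eq_zero.1 sub_eq_zero.1

lemma exists_ne_zero_semiconjBy (hre : a.re = b.re) (hnormSq : normSq a = normSq b) :
    ∃ x ≠ 0, SemiconjBy x b a := by
  by_cases! h : ∃ x, a * x - x * star b ≠ 0
  · obtain ⟨x, hx⟩ := h
    exact ⟨_, hx, semiconjBy_mul_sub_mul_star hre hnormSq x⟩
  · have ha : a = star b := by simpa [sub_eq_zero] using h 1
    have hcentral (x : ℍ[R]) : Commute a x := by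
      rw [commute_iff_eq, ← sub_eq_zero]
      nth_rw 2 [ha]
      exact h x
    have hab : a = b := by rw [← star_eq_self_of_forall_commute hcentral, ha, star_star]
    exact ⟨1, one_ne_zero, hab ▸ SemiconjBy.one_left a⟩

end LinearOrderedCommRing

section UnitQuaternion

variable {a b x : ℍ[ℝ]}

lemma self_mul_star_of_norm_eq_one (hx : ‖x‖ = 1) : x * star x = 1 := by
  rw [Quaternion.self_mul_star, Quaternion.normSq_eq_norm_mul_self, hx, mul_one,
    Quaternion.coe_one]

lemma star_mul_self_of_norm_eq_one (hx : ‖x‖ = 1) : star x * x = 1 := by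
  rw [star_comm_self', self_mul_star_of_norm_eq_one hx]

lemma star_mul_mul_eq_iff_semiconjBy (hx : ‖x‖ = 1) :
    star x * a * x = b ↔ SemiconjBy x b a := by
  constructor
  · rintro rfl
    rw [SemiconjBy, ← mul_assoc, ← mul_assoc, self_mul_star_of_norm_eq_one hx, one_mul]
  · intro h
    rw [mul_assoc, ← h.eq, ← mul_assoc, star_mul_self_of_norm_eq_one hx, one_mul]

lemma semiconjBy_star_mul_mul (hx : ‖x‖ = 1) (a : ℍ[ℝ]) : SemiconjBy x (star x * a * x) a :=
  (star_mul_mul_eq_iff_semiconjBy hx).1 rfl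

lemma star_semiconjBy_star_mul_mul (hx : ‖x‖ = 1) (a : ℍ[ℝ]) :
    SemiconjBy (star x) a (star x * a * x) := by
  rw [SemiconjBy, mul_assoc _ x, self_mul_star_of_norm_eq_one hx, mul_one]

lemma re_star_mul_mul (hx : ‖x‖ = 1) (a : ℍ[ℝ]) : (star x * a * x).re = a.re := by
  rw [re_mul_comm, ← mul_assoc, self_mul_star_of_norm_eq_one hx, one_mul]

lemma norm_star_mul_mul (hx : ‖x‖ = 1) (a : ℍ[ℝ]) : ‖star x * a * x‖ = ‖a‖ := by
  rw [norm_mul, norm_mul, norm_star, hx, one_mul, mul_one]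

lemma normSq_eq_normSq_of_norm_eq (hnorm : ‖a‖ = ‖b‖) : normSq a = normSq b := by
  rw [Quaternion.normSq_eq_norm_mul_self, Quaternion.normSq_eq_norm_mul_self, hnorm]

end UnitQuaternion

section GreatCircle

variable {p q p' q' l r x : ℍ[ℝ]}

lemma mem_K_iff_semiconjBy : x ∈ K p q ↔ ‖x‖ = 1 ∧ SemiconjBy x q p :=
  and_congr_right star_mul_mul_eq_iff_semiconjBy

lemma inv_norm_smul_mem_K (hx : x ≠ 0) (h : SemiconjBy x q p) : ‖x‖⁻¹ • x ∈ K p q :=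
  mem_K_iff_semiconjBy.2 ⟨norm_smul_inv_norm (𝕜 := ℝ) hx, h.smul_left _⟩

lemma K_nonempty (hre : p.re = q.re) (hnorm : ‖p‖ = ‖q‖) : (K p q).Nonempty :=
  let ⟨_, hx, h⟩ := exists_ne_zero_semiconjBy hre (normSq_eq_normSq_of_norm_eq hnorm)
  ⟨_, inv_norm_smul_mem_K hx h⟩

lemma K_star_star (p q : ℍ[ℝ]) : K (star p) (star q) = K p q := by
  ext x
  refine and_congr_right fun _ ↦ ?_
  rw [← star_inj, star_star]
  simp only [star_mul, star_star, mul_assoc]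

lemma image_star_mul_mul_K (hl : ‖l‖ = 1) (hr : ‖r‖ = 1) (p q : ℍ[ℝ]) :
    (fun x ↦ star l * x * r) '' K p q = K (star l * p * l) (star r * q * r) := by
  ext y
  simp only [Set.mem_image, mem_K_iff_semiconjBy]
  constructor
  · rintro ⟨x, ⟨hx, h⟩, rfl⟩
    exact ⟨by simp [hx, hl, hr],
      ((star_semiconjBy_star_mul_mul hl p).mul_left h).mul_left (semiconjBy_star_mul_mul hr q)⟩
  · rintro ⟨hy, h⟩
    refine ⟨l * y * star r, ⟨by simp [hy, hl, hr],
      ((semiconjBy_star_mul_mul hl p).mul_left h).mul_left (star_semiconjBy_star_mul_mul hr q)⟩, ?_⟩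
    calc star l * (l * y * star r) * r = star l * l * y * (star r * r) := by
          simp only [mul_assoc]
      _ = y := by
          rw [star_mul_self_of_norm_eq_one hl, star_mul_self_of_norm_eq_one hr, one_mul, mul_one]

lemma semiconjBy_of_K_subset (hK : K p q ⊆ K p' q') (h : SemiconjBy x q p) :
    SemiconjBy x q' p' := by
  rcases eq_or_ne x 0 with rfl | hx
  · exact SemiconjBy.zero_left q' p'
  · have hmem := hK (inv_norm_smul_mem_K hx h)
    simpa [hx] using (mem_K_iff_semiconjBy.1 hmem).2.smul_left ‖x‖

lemma commute_of_K_subset (hne : (K p q).Nonempty) (hK : K p q ⊆ K p' q') : Commute p' p := by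
  obtain ⟨x, hxK⟩ := hne
  obtain ⟨hx_norm, hx⟩ := mem_K_iff_semiconjBy.1 hxK
  have hx_ne : x ≠ 0 := norm_ne_zero_iff.1 (hx_norm ▸ one_ne_zero)
  have hx' : SemiconjBy x q' p' := semiconjBy_of_K_subset hK hx
  have hpx' : SemiconjBy (p * x) q' p' :=
    semiconjBy_of_K_subset hK ((Commute.refl p).semiconjBy.mul_left hx)
  refine mul_right_cancel₀ hx_ne ?_
  calc p' * p * x = p * x * q' := by rw [mul_assoc, hpx'.eq]
    _ = p * p' * x := by rw [mul_assoc, hx'.eq, mul_assoc]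

lemma K_eq_K_iff (hre : p.re = q.re) (hnorm : ‖p‖ = ‖q‖) (hre' : p'.re = p.re)
    (hnorm' : ‖p'‖ = ‖p‖) :
    K p q = K p' q' ↔ (p' = p ∧ q' = q) ∨ (p' = star p ∧ q' = star q) := by
  constructor
  · intro hK
    have hne := K_nonempty hre hnorm
    have hcomm := commute_of_K_subset hne hK.subset
    obtain ⟨x, hx⟩ := hne
    have hq : star x * p * x = q := hx.2
    have hq' : star x * p' * x = q' := (hK.subset hx).2
    refine (eq_or_eq_star_of_commute hcomm hre' (normSq_eq_normSq_of_norm_eq hnorm')).imp ?_ ?_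
    · rintro rfl
      exact ⟨rfl, hq'.symm.trans hq⟩
    · rintro rfl
      have hx_star : x ∈ K (star p) (star q) := (K_star_star p q).symm ▸ hx
      exact ⟨rfl, hq'.symm.trans hx_star.2⟩
  · rintro (⟨rfl, rfl⟩ | ⟨rfl, rfl⟩)
    · rfl
    · exact (K_star_star p q).symm

end GreatCircle

theorem statement6_general (p q l r : ℍ[ℝ]) (hre : p.re = q.re) (hnorm : ‖p‖ = ‖q‖)
    (hl : ‖l‖ = 1) (hr : ‖r‖ = 1) :
    (fun x ↦ star l * x * r) '' K p q = K p q ↔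
      (star l * p * l = p ∧ star r * q * r = q) ∨
        (star l * p * l = star p ∧ star r * q * r = star q) := by
  rw [image_star_mul_mul_K hl hr, eq_comm]
  exact K_eq_K_iff hre hnorm (re_star_mul_mul hl p) (norm_star_mul_mul hl p)

theorem statement6 (p q l r : Quaternion ℝ)
    (hp : p.re = 0) (hpn : ‖p‖ = 1) (hq : q.re = 0) (hqn : ‖q‖ = 1)
    (hl : ‖l‖ = 1) (hr : ‖r‖ = 1) :
    (fun x : Quaternion ℝ => star l * x * r) '' K p q = K p q ↔
      ((star l * p * l = p ∧ star r * q * r = q) ∨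
       (star l * p * l = -p ∧ star r * q * r = -q)) := by
  rw [← Quaternion.star_eq_neg.2 hp, ← Quaternion.star_eq_neg.2 hq]
  exact statement6_general p q l r (hp.trans hq.symm) (hpn.trans hqn.symm) hl hr
end

section
/- Let p, q be pure unit quaternions. If x ∈ K_p^q and y ∈ K_p^{−q}, then ⟪x, y⟫ = 0. Hence the great circles K_p^q and K_p^{−q} are absolutely orthogonal: every vector in the plane spanned by K_p^q is orthogonal to every vector in the plane spanned by K_p^{−q}. -/
open Quaternion RealInnerProductSpace

/-!
A point of `K_p^q` satisfies `p x = x q`, and a point of `K_p^{-q}` satisfies `p y = -y q`, so that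
`w = x * conj y` anticommutes with `p`. Conjugation by `p ≠ 0` preserves the real part, yet it sends
`w` to `-w`; hence `⟪x, y⟫ = Re w = 0`.
-/

section OrderedField

variable {R : Type*}

theorem quaternion_re_mul_comm [CommRing R] (a b : ℍ[R]) : (a * b).re = (b * a).re := by
  simp only [Quaternion.re_mul]
  ring

variable [Field R] [LinearOrder R] [IsStrictOrderedRing R]

theorem quaternion_star_eq_normSq_smul_inv (a : ℍ[R]) : star a = normSq a • a⁻¹ := by
  obtain rfl | ha := eq_or_ne a 0
  · simp
  · rw [Quaternion.inv_def, smul_inv_smul₀ (normSq_ne_zero.mpr ha)]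

theorem semiconjBy_quaternion_star {a p q : ℍ[R]} (h : SemiconjBy a q p) :
    SemiconjBy (star a) p q := by
  rw [quaternion_star_eq_normSq_smul_inv]
  exact h.inv_symm_left₀.smul_left _

theorem quaternion_re_eq_zero_of_semiconjBy_neg {w p : ℍ[R]} (hp : p ≠ 0)
    (h : SemiconjBy w p (-p)) : w.re = 0 := by
  have re_eq_neg : w.re = -w.re := calc
    w.re = (w * p * p⁻¹).re := by rw [mul_inv_cancel_right₀ hp]
    _ = -(p * w * p⁻¹).re := by rw [h.eq, neg_mul, neg_mul, Quaternion.re_neg]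
    _ = -(p⁻¹ * (p * w)).re := by rw [quaternion_re_mul_comm]
    _ = -w.re := by rw [inv_mul_cancel_left₀ hp]
  exact self_eq_neg.mp re_eq_neg

end OrderedField

section GreatCircle

variable {p q x y : ℍ[ℝ]}

theorem inner_eq_zero_of_semiconjBy_neg (hp : p ≠ 0) (hx : SemiconjBy x q p)
    (hy : SemiconjBy y (-q) p) : ⟪x, y⟫ = 0 := by
  have anticommute : SemiconjBy (x * star y) p (-p) :=
    hx.neg_right.mul_left (semiconjBy_quaternion_star hy)
  rw [Quaternion.inner_def]
  exact quaternion_re_eq_zero_of_semiconjBy_neg hp anticommute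

theorem semiconjBy_of_mem_K (hx : x ∈ K p q) : SemiconjBy x q p := by
  obtain ⟨norm_x, conj_x⟩ := hx
  have mul_star_x : x * star x = 1 := by
    rw [Quaternion.self_mul_star, Quaternion.normSq_eq_norm_mul_self, norm_x, one_mul,
      Quaternion.coe_one]
  calc x * q = x * star x * p * x := by rw [← conj_x]; simp only [mul_assoc]
    _ = p * x := by rw [mul_star_x, one_mul]

end GreatCircle

theorem statement7_general {p : ℍ[ℝ]} (hp : p ≠ 0) (q : ℍ[ℝ]) :
    Submodule.span ℝ (K p q) ⟂ Submodule.span ℝ (K p (-q)) :=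
  Submodule.isOrtho_span.mpr fun _ hx _ hy =>
    inner_eq_zero_of_semiconjBy_neg hp (semiconjBy_of_mem_K hx) (semiconjBy_of_mem_K hy)

theorem statement7 (p q : Quaternion ℝ)
    (hp : p.re = 0) (hpn : ‖p‖ = 1) (hq : q.re = 0) (hqn : ‖q‖ = 1) :
    (∀ x ∈ K p q, ∀ y ∈ K p (-q), ⟪x, y⟫ = 0) ∧
    (∀ u ∈ Submodule.span ℝ (K p q), ∀ v ∈ Submodule.span ℝ (K p (-q)),
      ⟪u, v⟫ = 0) := by
  have ortho := statement7_general (norm_ne_zero_iff.mp (hpn ▸ one_ne_zero)) q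
  exact ⟨fun _ hx _ hy => ortho.inner_eq (Submodule.subset_span hx) (Submodule.subset_span hy),
    fun _ hu _ hv => ortho.inner_eq hu hv⟩
end
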